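/- Let A be an affine hyperplane arrangement in K^d over a field K, and let cA be the cone over A in K^{d+1}, with additional hyperplane K : y = 0. Then the map X ↦ {H ∈ A : cH ≤ X} is a bijection between the set of modular elements X of L(cA) satisfying K ≤ X and the set of modular subarrangements of A. -/

import Mathlib

open Polynomial
open scoped Classical Pointwise

namespace HypArr

variable {K V : Type*} [Field K] [AddCommGroup V] [Module K V] [FiniteDimensional K V]

/-- `A` is an affine hyperplane arrangement: a finite set of affine hyperplanes,
i.e. nonempty affine subspaces of codimension one. -/
def IsArrangement (A : Finset (AffineSubspace K V)) : Prop :=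
  ∀ H ∈ A, H ≠ ⊥ ∧ Module.finrank K V = Module.finrank K H.direction + 1

/-- The intersection poset `L(A)`: all nonempty intersections of subfamilies of `A`
(the empty intersection being the whole space `⊤`).  The order of `L(A)` is *reverse*
inclusion, so `X ≤ Y` in `L(A)` corresponds to `Y ≤ X` as affine subspaces; the
minimal element `0̂` of `L(A)` is the whole space `⊤`. -/
noncomputable def poset (A : Finset (AffineSubspace K V)) : Finset (AffineSubspace K V) :=
  (A.powerset.image fun S => S.inf id).filter (· ≠ ⊥)

/-- The rank of an element of `L(A)`: its codimension in `V`. -/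
noncomputable def rk (X : AffineSubspace K V) : ℕ :=
  Module.finrank K V - Module.finrank K X.direction

/-- The rank `r(A)` of the arrangement: the maximal rank of an element of `L(A)`. -/
noncomputable def rank (A : Finset (AffineSubspace K V)) : ℕ := (poset A).sup rk

/-- An ideal of `L(A)` (with respect to the reverse-inclusion order of `L(A)`):
a downward closed subset of `L(A)`. -/
def IsIdeal (A I : Finset (AffineSubspace K V)) : Prop :=
  I ⊆ poset A ∧ ∀ X ∈ I, ∀ Y ∈ poset A, X ≤ Y → Y ∈ I

/-- The principal ideal `⟨X⟩ = {Y ∈ L(A) : Y ≤ X}` of `L(A)` (in the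
reverse-inclusion order of `L(A)`, i.e. `{Y ∈ L(A) : X ⊆ Y}`). -/
noncomputable def principal (A : Finset (AffineSubspace K V)) (X : AffineSubspace K V) :
    Finset (AffineSubspace K V) :=
  (poset A).filter fun Y => X ≤ Y

/-- The meet `X ∧ Y` in `L(A)`: the greatest element of `L(A)` below both `X` and `Y`
(in the reverse-inclusion order); in terms of affine subspaces it is the smallest
element of `L(A)` containing both `X` and `Y`.  In particular `X ∧ Y = 0̂` iff
`lmeet A X Y = ⊤`. -/
noncomputable def lmeet (A : Finset (AffineSubspace K V)) (X Y : AffineSubspace K V) :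
    AffineSubspace K V :=
  sInf {W | W ∈ poset A ∧ X ≤ W ∧ Y ≤ W}

/-- An ideal decomposition `{I_1, …, I_m}` of `L(A)`:
(I1) for every `X ∈ L(A) \ {0̂}` some `I j ∩ ⟨X⟩` is a nontrivial principal ideal;
(I2) joins `X_1 ∨ ⋯ ∨ X_m` (i.e. intersections) of members of the ideals exist;
(I3) these joins satisfy the rank condition. -/
def IsIdealDecomposition (A : Finset (AffineSubspace K V)) {m : ℕ}
    (I : Fin m → Finset (AffineSubspace K V)) : Prop :=
  (∀ i, IsIdeal A (I i)) ∧
  (∀ X ∈ poset A, X ≠ ⊤ →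
    ∃ j, ∃ Z ∈ poset A, Z ≠ ⊤ ∧ I j ∩ principal A X = principal A Z) ∧
  (∀ f : Fin m → AffineSubspace K V, (∀ i, f i ∈ I i) →
    Finset.univ.inf f ≠ (⊥ : AffineSubspace K V)) ∧
  (∀ f : Fin m → AffineSubspace K V, (∀ i, f i ∈ I i) →
    rk (Finset.univ.inf f) = ∑ i, rk (f i))

/-- The meet-complement `I^c = {Y ∈ L(A) : Y ∧ X = 0̂ for all X ∈ I}`. -/
noncomputable def meetCompl (A I : Finset (AffineSubspace K V)) : Finset (AffineSubspace K V) :=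
  (poset A).filter fun Y => ∀ X ∈ I, lmeet A X Y = ⊤

/-- An ideal `I` is modular if `{I, I^c}` is an ideal decomposition of `L(A)`. -/
def IsModularIdeal (A I : Finset (AffineSubspace K V)) : Prop :=
  IsIdealDecomposition A ![I, meetCompl A I]

/-- `μ` is the Möbius function `μ(0̂, ·)` of the finite intersection poset `P`
(ordered by reverse inclusion, with minimal element the maximal affine subspace in `P`):
the sum of `μ` over an interval `[0̂, X]` is `1` if `X = 0̂` and `0` otherwise. -/
def IsMobiusOn (P : Finset (AffineSubspace K V)) (μ : AffineSubspace K V → ℤ) : Prop :=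
  ∀ X ∈ P, ∑ Z ∈ P.filter (fun Z => X ≤ Z), μ Z = if ∀ Z ∈ P, Z ≤ X then 1 else 0

/-- The characteristic polynomial `χ(t) = ∑_{X ∈ P} μ(X) t^{dim X}` of an
intersection poset `P` with Möbius function `μ`. -/
noncomputable def charPolyOn (P : Finset (AffineSubspace K V)) (μ : AffineSubspace K V → ℤ) :
    Polynomial ℤ :=
  ∑ X ∈ P, C (μ X) * Polynomial.X ^ (Module.finrank K X.direction)

/-- The characteristic polynomial `χ̃(I, t) = ∑_{X ∈ I} μ(X) t^{r(I) - r(X)}` of an ideal. -/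
noncomputable def tildeChi (μ : AffineSubspace K V → ℤ) (I : Finset (AffineSubspace K V)) :
    Polynomial ℤ :=
  ∑ X ∈ I, C (μ X) * Polynomial.X ^ (I.sup rk - rk X)

/-- A central arrangement: the intersection of all hyperplanes is nonempty. -/
def IsCentral (A : Finset (AffineSubspace K V)) : Prop := A.inf id ≠ ⊥

/-- A modular element `Z ∈ L(A)`: `r(Z) + r(X) = r(Z ∧ X) + r(Z ∨ X)` for all `X ∈ L(A)`
(the join `Z ∨ X` being the intersection `Z ⊓ X` of affine subspaces). -/
def IsModularElement (A : Finset (AffineSubspace K V)) (Z : AffineSubspace K V) : Prop :=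
  Z ∈ poset A ∧ ∀ X ∈ poset A, rk Z + rk X = rk (lmeet A Z X) + rk (Z ⊓ X)

/-- The intersection poset of the restriction `B^W = {H ∩ W : H ∈ B, H ∩ W ≠ ∅}`
of the arrangement `B` to the affine subspace `W`, realized as a finset of affine
subspaces of the ambient space (with minimal element `W`). -/
noncomputable def tracePoset (B : Finset (AffineSubspace K V)) (W : AffineSubspace K V) :
    Finset (AffineSubspace K V) :=
  (((B.filter fun H => H ⊓ W ≠ ⊥).image fun H => H ⊓ W).powerset.image
      fun S => W ⊓ S.inf id).filter (· ≠ ⊥)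

/-- A modular subarrangement `B ⊆ A`: `L(B)`, viewed as a subposet of `L(A)`,
is a modular ideal of `L(A)`. -/
def IsModularSub (A B : Finset (AffineSubspace K V)) : Prop :=
  B ⊆ A ∧ IsModularIdeal A (poset B)

end HypArr

namespace HypArr

variable {K V : Type*} [Field K] [AddCommGroup V] [Module K V] [FiniteDimensional K V]

/-- The cone `cH` over an affine hyperplane `H ⊆ V`: the linear hyperplane of `V × K`
spanned by `H × {1}` (for `H : α·x = a` this is the hyperplane `α·x = a·y`). -/
noncomputable def cone (H : AffineSubspace K V) : AffineSubspace K (V × K) :=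
  (Submodule.span K ((fun x => (x, (1 : K))) '' (H : Set V))).toAffineSubspace

/-- The additional hyperplane `K : y = 0` of the cone construction. -/
noncomputable def addHyp (K V : Type*) [Field K] [AddCommGroup V] [Module K V] :
    AffineSubspace K (V × K) :=
  (LinearMap.ker (LinearMap.snd K V K)).toAffineSubspace

/-- The cone `cA` over the affine arrangement `A`: the linear arrangement in `V × K`
consisting of the cones `cH` for `H ∈ A` together with the additional hyperplane. -/
noncomputable def coneArr (A : Finset (AffineSubspace K V)) :
    Finset (AffineSubspace K (V × K)) :=
  insert (addHyp K V) (A.image cone)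

end HypArr

namespace HypArr

variable {K V : Type*} [Field K] [AddCommGroup V] [Module K V]

section Hyperplanes

variable {A B : Finset (AffineSubspace K V)} {H Y Z : AffineSubspace K V}

theorem IsArrangement.mono (hA : IsArrangement A) (hB : B ⊆ A) : IsArrangement B :=
  fun H hH => hA H (hB hH)

theorem IsArrangement.ne_top (hA : IsArrangement A) (hH : H ∈ A) : H ≠ ⊤ := by
  rintro rfl
  have h := (hA _ hH).2
  rw [AffineSubspace.direction_top, finrank_top] at h
  omega

theorem le_of_direction_le {p : V} (hpY : p ∈ Y) (hpZ : p ∈ Z)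
    (h : Y.direction ≤ Z.direction) : Y ≤ Z := by
  rw [← AffineSubspace.mk'_eq hpY, ← AffineSubspace.mk'_eq hpZ]
  intro x hx
  rw [AffineSubspace.mem_mk'] at hx ⊢
  exact h hx

variable [FiniteDimensional K V]

/-- A vector outside the direction of a hyperplane spans a complement of that direction. -/
theorem IsArrangement.exists_sub_smul_mem (hA : IsArrangement A) (hH : H ∈ A) {v : V}
    (hv : v ∉ H.direction) (w : V) : ∃ c : K, w - c • v ∈ H.direction := by
  have h1 : Module.finrank K (V ⧸ H.direction) = 1 := by
    have h2 := H.direction.finrank_quotient_add_finrank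
    have h3 := (hA H hH).2
    omega
  have h0 : H.direction.mkQ v ≠ 0 := by simpa using hv
  obtain ⟨c, hc⟩ := (finrank_eq_one_iff_of_nonzero' _ h0).1 h1 (H.direction.mkQ w)
  refine ⟨c, ?_⟩
  rw [← Submodule.ker_mkQ H.direction, LinearMap.mem_ker, map_sub, map_smul, hc, sub_self]

theorem IsArrangement.inf_ne_bot (hA : IsArrangement A) (hH : H ∈ A) (hY : Y ≠ ⊥)
    (h : ¬ Y.direction ≤ H.direction) : Y ⊓ H ≠ ⊥ := by
  obtain ⟨v, hvY, hv⟩ := SetLike.not_le_iff_exists.1 h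
  rw [← AffineSubspace.nonempty_iff_ne_bot]
  refine AffineSubspace.inter_nonempty_of_nonempty_of_sup_direction_eq_top
    ((AffineSubspace.nonempty_iff_ne_bot _).2 hY)
    ((AffineSubspace.nonempty_iff_ne_bot _).2 (hA H hH).1) ?_
  refine eq_top_iff.2 fun w _ => ?_
  obtain ⟨c, hc⟩ := hA.exists_sub_smul_mem hH hv w
  exact Submodule.mem_sup.2 ⟨c • v, Submodule.smul_mem _ c hvY, _, hc, by abel⟩

/-- If two hyperplanes cut `Y` properly and the first trace is contained in the second,
the traces agree. -/
theorem IsArrangement.inf_le_of_inf_le (hA : IsArrangement A) {H' : AffineSubspace K V}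
    (hH : H ∈ A) (hYH : Y ⊓ H ≠ ⊥) (hle : Y ⊓ H ≤ H') (hY : ¬ Y ≤ H') : Y ⊓ H' ≤ H := by
  obtain ⟨p, hpY, hpH⟩ := (AffineSubspace.nonempty_iff_ne_bot _).2 hYH
  have hpH' : p ∈ H' := hle ⟨hpY, hpH⟩
  refine le_of_direction_le ⟨hpY, hpH'⟩ hpH ?_
  by_contra hcon
  obtain ⟨v, hv, hvH⟩ := SetLike.not_le_iff_exists.1 hcon
  rw [AffineSubspace.direction_inf_of_mem hpY hpH'] at hv
  refine hY (le_of_direction_le hpY hpH' fun w hw => ?_)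
  obtain ⟨c, hc⟩ := hA.exists_sub_smul_mem hH hvH w
  have h1 : w - c • v ∈ (Y ⊓ H).direction := by
    rw [AffineSubspace.direction_inf_of_mem hpY hpH]
    exact ⟨sub_mem hw (Submodule.smul_mem _ c hv.1), hc⟩
  simpa using add_mem (AffineSubspace.direction_le hle h1) (Submodule.smul_mem _ c hv.2)

end Hyperplanes

section Poset

variable {A B : Finset (AffineSubspace K V)} {H Y Z : AffineSubspace K V}

theorem mem_finset_inf {S : Finset (AffineSubspace K V)} {x : V} :
    x ∈ S.inf id ↔ ∀ H ∈ S, x ∈ H := by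
  induction S using Finset.induction_on with
  | empty => simp
  | insert a s _ ih => simp [Finset.inf_insert, AffineSubspace.mem_inf_iff, ih]

theorem mem_poset : Y ∈ poset A ↔ Y ≠ ⊥ ∧ ∃ S ⊆ A, S.inf id = Y := by
  simp [poset, and_comm]

/-- A nonempty affine subspace lies in `L(A)` iff it is the intersection of the hyperplanes
containing it. -/
theorem mem_poset_iff :
    Y ∈ poset A ↔ Y ≠ ⊥ ∧ ∀ x, (∀ H ∈ A, Y ≤ H → x ∈ H) → x ∈ Y := by
  rw [mem_poset]
  refine and_congr_right fun _ => ⟨?_, fun h => ?_⟩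
  · rintro ⟨S, hS, rfl⟩ x hx
    exact mem_finset_inf.2 fun H hH => hx H (hS hH) (Finset.inf_le hH)
  · refine ⟨A.filter (Y ≤ ·), Finset.filter_subset _ _, le_antisymm (fun x hx => h x fun H hH hY => ?_)
      (Finset.le_inf fun H hH => (Finset.mem_filter.1 hH).2)⟩
    exact mem_finset_inf.1 hx H (Finset.mem_filter.2 ⟨hH, hY⟩)

theorem top_mem_poset : (⊤ : AffineSubspace K V) ∈ poset A :=
  mem_poset.2 ⟨top_ne_bot, ∅, by simp, by simp⟩

theorem mem_poset_of_mem (hH : H ∈ A) (h : H ≠ ⊥) : H ∈ poset A :=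
  mem_poset.2 ⟨h, {H}, by simpa using hH, by simp⟩

theorem poset_mono (h : B ⊆ A) : poset B ⊆ poset A := fun Y hY => by
  obtain ⟨h0, S, hS, rfl⟩ := mem_poset.1 hY
  exact mem_poset.2 ⟨h0, S, hS.trans h, rfl⟩

theorem inf_mem_poset (hY : Y ∈ poset A) (hZ : Z ∈ poset A) (h : Y ⊓ Z ≠ ⊥) :
    Y ⊓ Z ∈ poset A := by
  obtain ⟨_, S, hS, rfl⟩ := mem_poset.1 hY
  obtain ⟨_, T, hT, rfl⟩ := mem_poset.1 hZ
  exact mem_poset.2 ⟨h, S ∪ T, Finset.union_subset hS hT, Finset.inf_union⟩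

theorem filter_inf_mem_poset (hY : Y ≠ ⊥) : (A.filter (Y ≤ ·)).inf id ∈ poset A :=
  mem_poset.2 ⟨fun h => hY (le_bot_iff.1 (h ▸ Finset.le_inf fun _ hH => (Finset.mem_filter.1 hH).2)),
    _, Finset.filter_subset _ _, rfl⟩

theorem exists_le_of_ne_top (hY : Y ∈ poset A) (h : Y ≠ ⊤) : ∃ H ∈ A, Y ≤ H := by
  by_contra! hcon
  exact h (eq_top_iff.2 fun x _ => (mem_poset_iff.1 hY).2 x fun H hH hYH => absurd hYH (hcon H hH))

theorem lmeet_mem_poset (hY : Y ≠ ⊥) : lmeet A Y Z ∈ poset A := by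
  refine mem_poset_iff.2 ⟨fun h => hY (le_bot_iff.1 (h ▸ le_sInf fun W hW => hW.2.1)),
    fun x hx => ?_⟩
  rw [lmeet, ← SetLike.mem_coe, AffineSubspace.coe_sInf, Set.mem_iInter₂]
  intro W hW
  exact (mem_poset_iff.1 hW.1).2 x fun H hH hWH => hx H hH ((sInf_le hW).trans hWH)

theorem left_le_lmeet : Y ≤ lmeet A Y Z := le_sInf fun _ hW => hW.2.1

theorem right_le_lmeet : Z ≤ lmeet A Y Z := le_sInf fun _ hW => hW.2.2

theorem lmeet_le {W : AffineSubspace K V} (hW : W ∈ poset A) (hY : Y ≤ W) (hZ : Z ≤ W) :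
    lmeet A Y Z ≤ W := sInf_le ⟨hW, hY, hZ⟩

theorem mem_meetCompl_iff (hA : IsArrangement A) (hB : B ⊆ A) (hI : IsIdeal A (poset B)) :
    Y ∈ meetCompl A (poset B) ↔ Y ∈ poset A ∧ ∀ H ∈ B, ¬ Y ≤ H := by
  refine Finset.mem_filter.trans (and_congr_right fun hY => ⟨fun h H hH hYH => ?_, fun h Z hZ => ?_⟩)
  · have hHb := (hA H (hB hH)).1
    have h1 := lmeet_le (Y := H) (mem_poset_of_mem (hB hH) hHb) le_rfl hYH
    rw [h H (mem_poset_of_mem hH hHb)] at h1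
    exact hA.ne_top (hB hH) (top_le_iff.1 h1)
  · by_contra hcon
    have hmem := lmeet_mem_poset (A := A) (Z := Y) (mem_poset.1 hZ).1
    obtain ⟨H, hH, hle⟩ := exists_le_of_ne_top (hI.2 Z hZ _ hmem left_le_lmeet) hcon
    exact h H hH (right_le_lmeet.trans hle)

variable [FiniteDimensional K V]

/-- A minimal flat of an arrangement is parallel to every hyperplane. -/
theorem IsArrangement.exists_mem_poset_direction (hA : IsArrangement A) :
    ∃ Z ∈ poset A, ∀ v, v ∈ Z.direction ↔ ∀ H ∈ A, v ∈ H.direction := by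
  obtain ⟨Z, hZ⟩ := (poset A).exists_minimal ⟨⊤, top_mem_poset⟩
  refine ⟨Z, hZ.1, fun v => ⟨fun hv H hH => ?_, fun hv => ?_⟩⟩
  · by_contra hcon
    have hne : Z ⊓ H ≠ ⊥ :=
      hA.inf_ne_bot hH (mem_poset.1 hZ.1).1 fun h => hcon (h hv)
    have hle := hZ.2 (inf_mem_poset hZ.1 (mem_poset_of_mem hH (hA H hH).1) hne) inf_le_left
    exact hcon (AffineSubspace.direction_le (hle.trans inf_le_right) hv)
  · obtain ⟨h0, S, hS, rfl⟩ := mem_poset.1 hZ.1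
    obtain ⟨p, hp⟩ := (AffineSubspace.nonempty_iff_ne_bot _).2 h0
    rw [← AffineSubspace.vadd_mem_iff_mem_direction v hp]
    exact mem_finset_inf.2 fun H hH =>
      AffineSubspace.vadd_mem_of_mem_direction (hv H (hS hH)) (mem_finset_inf.1 hp H hH)

theorem rk_inf_of_sup_eq_top {p : V} (hY : p ∈ Y) (hZ : p ∈ Z)
    (h : Y.direction ⊔ Z.direction = ⊤) : rk (Y ⊓ Z) = rk Y + rk Z := by
  have h1 := Submodule.finrank_sup_add_finrank_inf_eq Y.direction Z.direction
  rw [h, finrank_top] at h1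
  have h2 := Submodule.finrank_le Y.direction
  have h3 := Submodule.finrank_le Z.direction
  have h4 := Submodule.finrank_le (Y.direction ⊓ Z.direction)
  rw [rk, rk, rk, AffineSubspace.direction_inf_of_mem hY hZ]
  omega

theorem sup_eq_top_of_rk_inf {p : V} (hY : p ∈ Y) (hZ : p ∈ Z)
    (h : rk (Y ⊓ Z) = rk Y + rk Z) : Y.direction ⊔ Z.direction = ⊤ := by
  have h1 := Submodule.finrank_sup_add_finrank_inf_eq Y.direction Z.direction
  have h2 := Submodule.finrank_le Y.direction
  have h3 := Submodule.finrank_le Z.direction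
  have h4 := Submodule.finrank_le (Y.direction ⊓ Z.direction)
  have h5 := Submodule.finrank_le (Y.direction ⊔ Z.direction)
  rw [rk, rk, rk, AffineSubspace.direction_inf_of_mem hY hZ] at h
  exact Submodule.eq_top_of_finrank_eq (by omega)

end Poset

section ModularDirection

variable {A B : Finset (AffineSubspace K V)} {D : Submodule K V}

/-- Translating any flat of `A` along the subspace `D` gives a flat of `A`. -/
def IsModularDirection (A : Finset (AffineSubspace K V)) (D : Submodule K V) : Prop :=
  ∀ Y ∈ poset A, ∀ p ∈ Y, AffineSubspace.mk' p (Y.direction ⊔ D) ∈ poset A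

theorem mk'_le_iff {p : V} {E : Submodule K V} {W : AffineSubspace K V} (hp : p ∈ W) :
    AffineSubspace.mk' p E ≤ W ↔ E ≤ W.direction := by
  refine ⟨fun h => ?_, fun h => le_of_direction_le (AffineSubspace.self_mem_mk' _ _) hp ?_⟩
  · simpa using AffineSubspace.direction_le h
  · simpa using h

theorem mem_poset_filter_direction {Y : AffineSubspace K V} :
    Y ∈ poset (A.filter fun H => D ≤ H.direction) ↔
      Y ∈ poset A ∧ D ≤ Y.direction := by
  constructor
  · intro h
    refine ⟨poset_mono (Finset.filter_subset _ _) h, fun v hv => ?_⟩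
    obtain ⟨h0, S, hS, rfl⟩ := mem_poset.1 h
    obtain ⟨p, hp⟩ := (AffineSubspace.nonempty_iff_ne_bot _).2 h0
    rw [← AffineSubspace.vadd_mem_iff_mem_direction v hp]
    exact mem_finset_inf.2 fun H hH => AffineSubspace.vadd_mem_of_mem_direction
      ((Finset.mem_filter.1 (hS hH)).2 hv) (mem_finset_inf.1 hp H hH)
  · rintro ⟨hY, hD⟩
    refine mem_poset_iff.2 ⟨(mem_poset.1 hY).1, fun x hx => (mem_poset_iff.1 hY).2 x ?_⟩
    exact fun H hH hYH => hx H
      (Finset.mem_filter.2 ⟨hH, hD.trans (AffineSubspace.direction_le hYH)⟩) hYH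

variable [FiniteDimensional K V]

theorem IsModularDirection.isModularSub (hA : IsArrangement A) (hD : IsModularDirection A D) :
    IsModularSub A (A.filter fun H => D ≤ H.direction) := by
  set B := A.filter fun H => D ≤ H.direction with hBdef
  have hBA : B ⊆ A := Finset.filter_subset _ _
  have hI : IsIdeal A (poset B) := by
    refine ⟨poset_mono hBA, fun Z hZ Y hY hle => ?_⟩
    rw [mem_poset_filter_direction] at hZ ⊢
    exact ⟨hY, hZ.2.trans (AffineSubspace.direction_le hle)⟩
  have hcompl : ∀ Y, Y ∈ meetCompl A (poset B) ↔ Y ∈ poset A ∧ Y.direction ⊔ D = ⊤ := by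
    intro Y
    rw [mem_meetCompl_iff hA hBA hI]
    refine and_congr_right fun hY => ⟨fun h => ?_, fun h H hH hYH => ?_⟩
    · obtain ⟨p, hp⟩ := (AffineSubspace.nonempty_iff_ne_bot _).2 (mem_poset.1 hY).1
      by_contra hcon
      have hne : AffineSubspace.mk' p (Y.direction ⊔ D) ≠ ⊤ := fun h1 =>
        hcon (by simpa using congrArg AffineSubspace.direction h1)
      obtain ⟨H, hH, hle⟩ := exists_le_of_ne_top (hD Y hY p hp) hne
      have hpH : p ∈ H := hle (AffineSubspace.self_mem_mk' _ _)
      rw [mk'_le_iff hpH, sup_le_iff] at hle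
      exact h H (Finset.mem_filter.2 ⟨hH, hle.2⟩) (le_of_direction_le hp hpH hle.1)
    · have h1 := (Finset.mem_filter.1 hH).2
      have h2 := sup_le (AffineSubspace.direction_le hYH) h1
      rw [h, top_le_iff] at h2
      obtain ⟨q, hq⟩ := (AffineSubspace.nonempty_iff_ne_bot _).2 (hA H (hBA hH)).1
      exact hA.ne_top (hBA hH) ((AffineSubspace.direction_eq_top_iff_of_nonempty ⟨q, hq⟩).1 h2)
  have hsup : ∀ f : Fin 2 → AffineSubspace K V,
      (∀ i, f i ∈ ![poset B, meetCompl A (poset B)] i) →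
      f 0 ≠ ⊥ ∧ f 1 ≠ ⊥ ∧ (f 0).direction ⊔ (f 1).direction = ⊤ := by
    intro f hf
    have h0 : f 0 ∈ poset B := hf 0
    have h1 : f 1 ∈ meetCompl A (poset B) := hf 1
    rw [hcompl] at h1
    refine ⟨(mem_poset.1 h0).1, (mem_poset.1 h1.1).1, ?_⟩
    rw [eq_top_iff, ← h1.2, sup_comm]
    exact sup_le_sup_right (mem_poset_filter_direction.1 h0).2 _
  have hmeet : ∀ f : Fin 2 → AffineSubspace K V,
      (∀ i, f i ∈ ![poset B, meetCompl A (poset B)] i) → ∃ p, p ∈ f 0 ∧ p ∈ f 1 := by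
    intro f hf
    obtain ⟨h0, h1, h2⟩ := hsup f hf
    exact AffineSubspace.inter_nonempty_of_nonempty_of_sup_direction_eq_top
      ((AffineSubspace.nonempty_iff_ne_bot _).2 h0)
      ((AffineSubspace.nonempty_iff_ne_bot _).2 h1) h2
  refine ⟨hBA, ?_, fun Y hY hne => ?_, fun f hf => ?_, fun f hf => ?_⟩
  · refine Fin.forall_fin_two.2 ⟨hI, Finset.filter_subset _ _, fun X hX Y hY hle => ?_⟩
    change Y ∈ meetCompl A (poset B)
    replace hX : X ∈ meetCompl A (poset B) := hX
    rw [hcompl] at hX ⊢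
    exact ⟨hY, top_le_iff.1 (hX.2 ▸ sup_le_sup_right (AffineSubspace.direction_le hle) _)⟩
  · obtain ⟨p, hp⟩ := (AffineSubspace.nonempty_iff_ne_bot _).2 (mem_poset.1 hY).1
    by_cases htop : Y.direction ⊔ D = ⊤
    · refine ⟨1, Y, hY, hne, Finset.inter_eq_right.2 fun Z hZ => ?_⟩
      obtain ⟨hZ, hle⟩ := Finset.mem_filter.1 hZ
      change Z ∈ meetCompl A (poset B)
      rw [hcompl]
      exact ⟨hZ, top_le_iff.1 (htop ▸ sup_le_sup_right (AffineSubspace.direction_le hle) _)⟩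
    · refine ⟨0, _, hD Y hY p hp, fun h1 =>
        htop (by simpa using congrArg AffineSubspace.direction h1), ?_⟩
      ext Z
      change Z ∈ poset B ∩ _ ↔ _
      rw [Finset.mem_inter, mem_poset_filter_direction, principal, principal,
        Finset.mem_filter, Finset.mem_filter]
      constructor
      · rintro ⟨⟨hZ, hDZ⟩, -, hle⟩
        exact ⟨hZ, (mk'_le_iff (hle hp)).2 (sup_le (AffineSubspace.direction_le hle) hDZ)⟩
      · rintro ⟨hZ, hle⟩
        have hpZ : p ∈ Z := hle (AffineSubspace.self_mem_mk' _ _)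
        rw [mk'_le_iff hpZ, sup_le_iff] at hle
        exact ⟨⟨hZ, hle.2⟩, hZ, le_of_direction_le hp hpZ hle.1⟩
  · obtain ⟨p, h0, h1⟩ := hmeet f hf
    rw [← AffineSubspace.nonempty_iff_ne_bot]
    exact ⟨p, by simpa [Fin.univ_succ] using ⟨h0, h1⟩⟩
  · obtain ⟨p, h0, h1⟩ := hmeet f hf
    simpa [Fin.univ_succ] using rk_inf_of_sup_eq_top h0 h1 (hsup f hf).2.2

/-- A modular subarrangement consists of the hyperplanes parallel to a modular direction. -/
theorem IsModularSub.exists_isModularDirection (hA : IsArrangement A) (hB : IsModularSub A B) :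
    ∃ D : Submodule K V, IsModularDirection A D ∧ (A.filter fun H => D ≤ H.direction) = B ∧
      ∀ v, (∀ H ∈ B, v ∈ H.direction) → v ∈ D := by
  obtain ⟨hBA, hIs, -, hne, hrk⟩ := hB
  have hI : IsIdeal A (poset B) := hIs 0
  have hdec : ∀ Z ∈ poset B, ∀ Y ∈ poset A, (∀ H ∈ B, ¬ Y ≤ H) →
      Z.direction ⊔ Y.direction = ⊤ := by
    intro Z hZ Y hY hYB
    have hmem : ∀ i, ![Z, Y] i ∈ ![poset B, meetCompl A (poset B)] i :=
      Fin.forall_fin_two.2 ⟨hZ, (mem_meetCompl_iff hA hBA hI).2 ⟨hY, hYB⟩⟩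
    have h1 := hne _ hmem
    have h2 := hrk _ hmem
    rw [← AffineSubspace.nonempty_iff_ne_bot] at h1
    obtain ⟨p, hp⟩ := h1
    simp only [Fin.univ_succ] at hp h2
    simp at hp h2
    exact sup_eq_top_of_rk_inf hp.1 hp.2 h2
  obtain ⟨Z₀, hZ₀, hdir⟩ := (hA.mono hBA).exists_mem_poset_direction
  refine ⟨Z₀.direction, fun Y hY p hp => ?_, ?_, fun v hv => (hdir v).2 hv⟩
  · set Z := (B.filter (Y ≤ ·)).inf id with hZdef
    have hZB : Z ∈ poset B := filter_inf_mem_poset (mem_poset.1 hY).1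
    have hYZ : Y ≤ Z := Finset.le_inf fun H hH => (Finset.mem_filter.1 hH).2
    have hDZ : Z₀.direction ≤ Z.direction := by
      intro v hv
      rw [← AffineSubspace.vadd_mem_iff_mem_direction v (hYZ hp)]
      exact mem_finset_inf.2 fun H hH => AffineSubspace.vadd_mem_of_mem_direction
        ((hdir v).1 hv H (Finset.mem_filter.1 hH).1) (mem_finset_inf.1 (hYZ hp) H hH)
    obtain ⟨Y₁, hY₁⟩ := ((poset A).filter fun W => Y ≤ W ∧ ∀ H ∈ B, ¬ W ≤ H).exists_minimal
      ⟨⊤, Finset.mem_filter.2 ⟨top_mem_poset, le_top, fun H hH h =>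
        hA.ne_top (hBA hH) (top_le_iff.1 h)⟩⟩
    obtain ⟨hY₁A, hYY₁, hY₁B⟩ := Finset.mem_filter.1 hY₁.1
    have hinf : Y₁ ⊓ Z ≤ Y := by
      intro x hx
      refine (mem_poset_iff.1 hY).2 x fun H hH hYH => ?_
      by_cases hle : Y₁ ≤ H
      · exact hle hx.1
      have hne : Y₁ ⊓ H ≠ ⊥ := (AffineSubspace.nonempty_iff_ne_bot _).1 ⟨p, hYY₁ hp, hYH hp⟩
      have hmem := inf_mem_poset hY₁A (mem_poset_of_mem hH (hA H hH).1) hne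
      have hex : ∃ H' ∈ B, Y₁ ⊓ H ≤ H' := by
        by_contra! hcon
        exact hle ((hY₁.2 (Finset.mem_filter.2 ⟨hmem, le_inf hYY₁ hYH, hcon⟩)
          inf_le_left).trans inf_le_right)
      obtain ⟨H', hH', hle'⟩ := hex
      refine hA.inf_le_of_inf_le hH hne hle' (hY₁B H' hH') ⟨hx.1, ?_⟩
      exact mem_finset_inf.1 hx.2 H' (Finset.mem_filter.2 ⟨hH', (le_inf hYY₁ hYH).trans hle'⟩)
    have hYeq : Y = Y₁ ⊓ Z := le_antisymm (le_inf hYY₁ hYZ) hinf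
    have hdirY : Y.direction = Y₁.direction ⊓ Z.direction := by
      rw [hYeq, AffineSubspace.direction_inf_of_mem (hYY₁ hp) (hYZ hp)]
    have hsum : Y.direction ⊔ Z₀.direction = Z.direction := by
      rw [hdirY, inf_comm, inf_sup_assoc_of_le _ hDZ, sup_comm, hdec Z₀ hZ₀ Y₁ hY₁A hY₁B, inf_top_eq]
    rw [hsum, AffineSubspace.mk'_eq (hYZ hp)]
    exact poset_mono hBA hZB
  · ext H
    rw [Finset.mem_filter]
    refine ⟨fun ⟨hH, hle⟩ => ?_, fun hH => ⟨hBA hH, fun v hv => (hdir v).1 hv H hH⟩⟩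
    by_contra hHB
    have hHb := (hA H hH).1
    have htop : Z₀.direction ⊔ H.direction = ⊤ := by
      refine hdec Z₀ hZ₀ H (mem_poset_of_mem hH hHb) fun H' hH' hHH' => hHB ?_
      obtain ⟨q, hq⟩ := (AffineSubspace.nonempty_iff_ne_bot _).2 hHb
      have heq : H.direction = H'.direction :=
        Submodule.eq_of_le_of_finrank_eq (AffineSubspace.direction_le hHH')
          (by have := (hA H hH).2; have := (hA H' (hBA hH')).2; omega)
      rwa [AffineSubspace.eq_of_direction_eq_of_nonempty_of_le heq ⟨q, hq⟩ hHH']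
    rw [sup_eq_right.2 hle, AffineSubspace.direction_eq_top_iff_of_nonempty
      ((AffineSubspace.nonempty_iff_ne_bot _).2 hHb)] at htop
    exact hA.ne_top hH htop

end ModularDirection

section Cone

/-- The linear subspace of `V × K` spanned by the translate of `D` through `(p, 1)`. -/
def coneSubmodule (p : V) (D : Submodule K V) : Submodule K (V × K) :=
  D.comap (LinearMap.fst K V K - (LinearMap.snd K V K).smulRight p)

theorem mem_coneSubmodule {p : V} {D : Submodule K V} {x : V × K} :
    x ∈ coneSubmodule p D ↔ x.1 - x.2 • p ∈ D := Iff.rfl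

theorem cone_eq {H : AffineSubspace K V} {p : V} (hp : p ∈ H) :
    cone H = (coneSubmodule p H.direction).toAffineSubspace := by
  rw [cone]
  congr 1
  refine le_antisymm (Submodule.span_le.2 ?_) fun x hx => ?_
  · rintro _ ⟨q, hq, rfl⟩
    simpa [mem_coneSubmodule] using AffineSubspace.vsub_mem_direction hq hp
  · have h1 : ((x.1 - x.2 • p) + p, (1 : K)) ∈
        Submodule.span K ((fun x => (x, (1 : K))) '' (H : Set V)) :=
      Submodule.subset_span ⟨_, AffineSubspace.vadd_mem_of_mem_direction hx hp, rfl⟩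
    have h2 : (p, (1 : K)) ∈ Submodule.span K ((fun x => (x, (1 : K))) '' (H : Set V)) :=
      Submodule.subset_span ⟨p, hp, rfl⟩
    have h3 := add_mem h1 (Submodule.smul_mem _ (x.2 - 1) h2)
    convert h3 using 1
    ext
    · simp only [Prod.fst_add, Prod.smul_fst]
      module
    · simp

theorem mem_cone_iff {H : AffineSubspace K V} {p : V} (hp : p ∈ H) {x : V × K} :
    x ∈ cone H ↔ x.1 - x.2 • p ∈ H.direction := by
  rw [cone_eq hp, Submodule.mem_toAffineSubspace, mem_coneSubmodule]

theorem prodMk_one_mem_cone_iff {H : AffineSubspace K V} (hH : H ≠ ⊥) {v : V} :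
    (v, (1 : K)) ∈ cone H ↔ v ∈ H := by
  obtain ⟨p, hp⟩ := (AffineSubspace.nonempty_iff_ne_bot _).2 hH
  rw [mem_cone_iff hp, one_smul, ← vsub_eq_sub, AffineSubspace.vsub_right_mem_direction_iff_mem hp]

theorem prodMk_zero_mem_cone_iff {H : AffineSubspace K V} (hH : H ≠ ⊥) {v : V} :
    (v, (0 : K)) ∈ cone H ↔ v ∈ H.direction := by
  obtain ⟨p, hp⟩ := (AffineSubspace.nonempty_iff_ne_bot _).2 hH
  rw [mem_cone_iff hp, zero_smul, sub_zero]

theorem mem_addHyp {x : V × K} : x ∈ addHyp K V ↔ x.2 = 0 := Iff.rfl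

theorem cone_le_cone_iff {Y H : AffineSubspace K V} (hY : Y ≠ ⊥) (hH : H ≠ ⊥) :
    cone Y ≤ cone H ↔ Y ≤ H := by
  refine ⟨fun h v hv => ?_, fun h => ?_⟩
  · exact (prodMk_one_mem_cone_iff hH).1 (h ((prodMk_one_mem_cone_iff hY).2 hv))
  · exact Submodule.span_mono (Set.image_mono h)

theorem not_cone_le_addHyp {Y : AffineSubspace K V} (hY : Y ≠ ⊥) : ¬ cone Y ≤ addHyp K V := by
  obtain ⟨p, hp⟩ := (AffineSubspace.nonempty_iff_ne_bot _).2 hY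
  exact fun h => one_ne_zero (mem_addHyp.1 (h ((prodMk_one_mem_cone_iff hY).2 hp)))

theorem prod_bot_le_addHyp (D : Submodule K V) :
    (D.prod (⊥ : Submodule K K)).toAffineSubspace ≤ addHyp K V := fun _ hx => hx.2

theorem prod_bot_le_cone_iff {D : Submodule K V} {H : AffineSubspace K V} (hH : H ≠ ⊥) :
    (D.prod (⊥ : Submodule K K)).toAffineSubspace ≤ cone H ↔ D ≤ H.direction := by
  refine ⟨fun h v hv => (prodMk_zero_mem_cone_iff hH).1 (h ⟨hv, rfl⟩), fun h => ?_⟩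
  rintro ⟨v, t⟩ ⟨hv, ht⟩
  obtain rfl : t = 0 := ht
  exact (prodMk_zero_mem_cone_iff hH).2 (h hv)

theorem toAffineSubspace_ne_bot {M : Type*} [AddCommGroup M] [Module K M] (S : Submodule K M) :
    S.toAffineSubspace ≠ ⊥ :=
  (AffineSubspace.nonempty_iff_ne_bot _).1 ⟨0, S.zero_mem⟩

/-- A linear subspace of `V × K` is contained in `V × 0` or is the cone over an affine subspace. -/
theorem eq_prod_bot_or_eq_cone (S : Submodule K (V × K)) :
    (∃ D : Submodule K V, S = D.prod ⊥) ∨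
      ∃ (p : V) (Y : AffineSubspace K V), p ∈ Y ∧ S = coneSubmodule p Y.direction := by
  by_cases h : ∀ x ∈ S, x.2 = 0
  · refine Or.inl ⟨S.comap (LinearMap.inl K V K), ?_⟩
    ext ⟨v, t⟩
    refine ⟨fun hx => ?_, ?_⟩
    · obtain rfl : t = 0 := h _ hx
      exact ⟨hx, rfl⟩
    · rintro ⟨hv, ht⟩
      obtain rfl : t = 0 := ht
      exact hv
  · push Not at h
    obtain ⟨x, hx, hx0⟩ := h
    have hp : (x.2⁻¹ • x.1, (1 : K)) ∈ S := by
      convert S.smul_mem x.2⁻¹ hx using 1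
      ext <;> simp [hx0]
    refine Or.inr ⟨x.2⁻¹ • x.1, AffineSubspace.mk' (x.2⁻¹ • x.1) (S.comap (LinearMap.inl K V K)),
      AffineSubspace.self_mem_mk' _ _, ?_⟩
    set p := x.2⁻¹ • x.1
    ext ⟨v, t⟩
    rw [AffineSubspace.direction_mk', mem_coneSubmodule, Submodule.mem_comap]
    have h1 : LinearMap.inl K V K (v - t • p) = (v, t) - t • (p, (1 : K)) := by
      ext <;> simp
    rw [h1, Submodule.sub_mem_iff_left _ (S.smul_mem t hp)]

theorem prod_bot_sup_coneSubmodule (D E : Submodule K V) (p : V) :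
    D.prod ⊥ ⊔ coneSubmodule p E = coneSubmodule p (E ⊔ D) := by
  refine le_antisymm (sup_le ?_ ?_) fun x hx => ?_
  · rintro ⟨v, t⟩ ⟨hv, ht⟩
    obtain rfl : t = 0 := ht
    rw [mem_coneSubmodule, zero_smul, sub_zero]
    exact Submodule.mem_sup_right hv
  · exact Submodule.comap_mono le_sup_left
  · obtain ⟨e, he, d, hd, hed⟩ := Submodule.mem_sup.1 hx
    refine Submodule.mem_sup.2 ⟨(d, 0), ⟨hd, rfl⟩, (x.1 - d, x.2), ?_, by ext <;> simp⟩
    rw [mem_coneSubmodule]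
    convert he using 1
    change _ = x.1 - x.2 • p at hed
    rw [sub_right_comm, ← hed, add_sub_cancel_right]

end Cone

section ConeArrangement

variable {A : Finset (AffineSubspace K V)}

theorem forall_mem_coneArr {P : AffineSubspace K (V × K) → Prop} :
    (∀ H ∈ coneArr A, P H) ↔ P (addHyp K V) ∧ ∀ H ∈ A, P (cone H) := by
  simp [coneArr]

theorem cone_mem_poset_iff (hA : IsArrangement A) {Y : AffineSubspace K V} (hY : Y ≠ ⊥) :
    cone Y ∈ poset (coneArr A) ↔ Y ∈ poset A := by
  rw [mem_poset_iff, mem_poset_iff]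
  refine and_congr (iff_of_true (toAffineSubspace_ne_bot _) hY) ?_
  simp only [forall_mem_coneArr, not_cone_le_addHyp hY, false_imp_iff, true_and]
  refine ⟨fun h v hv => (prodMk_one_mem_cone_iff hY).1 (h _ fun H hH hle => ?_), fun h x hx => ?_⟩
  · have hHb := (hA H hH).1
    exact (prodMk_one_mem_cone_iff hHb).2 (hv H hH ((cone_le_cone_iff hY hHb).1 hle))
  · obtain ⟨p, hp⟩ := (AffineSubspace.nonempty_iff_ne_bot _).2 hY
    rw [mem_cone_iff hp, ← AffineSubspace.vadd_mem_iff_mem_direction _ hp]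
    refine h _ fun H hH hle => AffineSubspace.vadd_mem_of_mem_direction ?_ (hle hp)
    exact (mem_cone_iff (hle hp)).1 (hx H hH ((cone_le_cone_iff hY (hA H hH).1).2 hle))

theorem prod_bot_mem_poset_iff (hA : IsArrangement A) {D : Submodule K V} :
    (D.prod (⊥ : Submodule K K)).toAffineSubspace ∈ poset (coneArr A) ↔
      ∀ v, (∀ H ∈ A, D ≤ H.direction → v ∈ H.direction) → v ∈ D := by
  rw [mem_poset_iff]
  simp only [forall_mem_coneArr, toAffineSubspace_ne_bot, prod_bot_le_addHyp, ne_eq,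
    not_false_eq_true, true_and, true_imp_iff]
  refine ⟨fun h v hv => (h (v, 0) ⟨rfl, fun H hH hle => ?_⟩).1, ?_⟩
  · have hHb := (hA H hH).1
    exact (prodMk_zero_mem_cone_iff hHb).2 (hv H hH ((prod_bot_le_cone_iff hHb).1 hle))
  · rintro h ⟨v, t⟩ ⟨ht, hx⟩
    obtain rfl : t = 0 := ht
    refine ⟨h v fun H hH hle => ?_, rfl⟩
    have hHb := (hA H hH).1
    exact (prodMk_zero_mem_cone_iff hHb).1 (hx H hH ((prod_bot_le_cone_iff hHb).2 hle))

theorem exists_eq_toAffineSubspace_of_mem_poset {X : AffineSubspace K (V × K)}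
    (hX : X ∈ poset (coneArr A)) : ∃ S : Submodule K (V × K), X = S.toAffineSubspace := by
  refine ⟨X.direction, ?_⟩
  have h0 : (0 : V × K) ∈ X := by
    refine (mem_poset_iff.1 hX).2 0 (forall_mem_coneArr.2 ⟨fun _ => rfl, fun H _ _ => ?_⟩)
    exact Submodule.zero_mem _
  ext x
  rw [Submodule.mem_toAffineSubspace, ← AffineSubspace.vsub_right_mem_direction_iff_mem h0,
    vsub_eq_sub, sub_zero]

theorem exists_eq_prod_bot {X : AffineSubspace K (V × K)} (hX : X ∈ poset (coneArr A))
    (hle : X ≤ addHyp K V) :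
    ∃ D : Submodule K V, X = (D.prod (⊥ : Submodule K K)).toAffineSubspace := by
  obtain ⟨S, rfl⟩ := exists_eq_toAffineSubspace_of_mem_poset hX
  obtain ⟨D, rfl⟩ | ⟨p, Y, hp, rfl⟩ := eq_prod_bot_or_eq_cone S
  · exact ⟨D, rfl⟩
  · rw [← cone_eq hp] at hle
    exact absurd hle (not_cone_le_addHyp ((AffineSubspace.nonempty_iff_ne_bot _).1 ⟨p, hp⟩))

theorem filter_prod_bot_le_cone (hA : IsArrangement A) (D : Submodule K V) :
    (A.filter fun H => (D.prod (⊥ : Submodule K K)).toAffineSubspace ≤ cone H) =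
      A.filter fun H => D ≤ H.direction :=
  Finset.filter_congr fun H hH => prod_bot_le_cone_iff (hA H hH).1

variable [FiniteDimensional K V]

/-- In a linear arrangement, an element is modular iff its sum with every element of the
lattice is again an element of the lattice. -/
theorem isModularElement_iff {S : Submodule K (V × K)}
    (hS : S.toAffineSubspace ∈ poset (coneArr A)) :
    IsModularElement (coneArr A) S.toAffineSubspace ↔
      ∀ T : Submodule K (V × K), T.toAffineSubspace ∈ poset (coneArr A) →
        (S ⊔ T).toAffineSubspace ∈ poset (coneArr A) := by
  have hdim : ∀ T : Submodule K (V × K),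
      rk S.toAffineSubspace + rk T.toAffineSubspace =
        rk (S ⊔ T).toAffineSubspace + rk (S.toAffineSubspace ⊓ T.toAffineSubspace) := by
    intro T
    have h1 := Submodule.finrank_sup_add_finrank_inf_eq S T
    have h2 := Submodule.finrank_le S
    have h3 := Submodule.finrank_le T
    have h4 := Submodule.finrank_le (S ⊓ T)
    have h5 := Submodule.finrank_le (S ⊔ T)
    rw [rk, rk, rk, rk, AffineSubspace.direction_inf_of_mem (p := 0) S.zero_mem T.zero_mem]
    rw [Submodule.toAffineSubspace_direction, Submodule.toAffineSubspace_direction,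
      Submodule.toAffineSubspace_direction]
    omega
  constructor
  · intro h T hT
    have hmem := lmeet_mem_poset (A := coneArr A) (Z := T.toAffineSubspace) (toAffineSubspace_ne_bot S)
    have hrk := h.2 _ hT
    obtain ⟨U, hU⟩ := exists_eq_toAffineSubspace_of_mem_poset hmem
    have hle : S ⊔ T ≤ U := by
      have h1 := left_le_lmeet (A := coneArr A) (Y := S.toAffineSubspace) (Z := T.toAffineSubspace)
      have h2 := right_le_lmeet (A := coneArr A) (Y := S.toAffineSubspace) (Z := T.toAffineSubspace)
      rw [hU] at h1 h2
      exact sup_le h1 h2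
    rw [hU] at hmem hrk
    rw [hdim, Nat.add_right_cancel_iff, rk, rk, Submodule.toAffineSubspace_direction,
      Submodule.toAffineSubspace_direction] at hrk
    have h3 := Submodule.finrank_le U
    have h4 := Submodule.finrank_le (S ⊔ T)
    rwa [Submodule.eq_of_le_of_finrank_eq hle (by omega)]
  · refine fun h => ⟨hS, fun X hX => ?_⟩
    obtain ⟨T, rfl⟩ := exists_eq_toAffineSubspace_of_mem_poset hX
    have hmeet : lmeet (coneArr A) S.toAffineSubspace T.toAffineSubspace =
        (S ⊔ T).toAffineSubspace := by
      refine le_antisymm (lmeet_le (h T hX) (le_sup_left : S ≤ S ⊔ T) (le_sup_right : T ≤ S ⊔ T)) ?_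
      refine le_sInf ?_
      rintro W ⟨hW, hSW, hTW⟩
      obtain ⟨U, rfl⟩ := exists_eq_toAffineSubspace_of_mem_poset hW
      exact sup_le (a := S) (b := T) (c := U) hSW hTW
    rw [hmeet, hdim]

theorem isModularElement_prod_bot_iff (hA : IsArrangement A) {D : Submodule K V}
    (hD : (D.prod (⊥ : Submodule K K)).toAffineSubspace ∈ poset (coneArr A)) :
    IsModularElement (coneArr A) (D.prod (⊥ : Submodule K K)).toAffineSubspace ↔
      IsModularDirection A D := by
  rw [isModularElement_iff hD]
  have hcone : ∀ (p : V) (E : Submodule K V),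
      (coneSubmodule p E).toAffineSubspace = cone (AffineSubspace.mk' p E) := fun p E => by
    rw [cone_eq (AffineSubspace.self_mem_mk' p E), AffineSubspace.direction_mk']
  have hmk : ∀ (p : V) (E : Submodule K V), AffineSubspace.mk' p E ≠ ⊥ := fun p E =>
    (AffineSubspace.nonempty_iff_ne_bot _).1 ⟨p, AffineSubspace.self_mem_mk' p E⟩
  constructor
  · intro h Y hY p hp
    have h1 := h (coneSubmodule p Y.direction)
      (by rwa [← cone_eq hp, cone_mem_poset_iff hA (mem_poset.1 hY).1])
    rwa [prod_bot_sup_coneSubmodule, hcone, cone_mem_poset_iff hA (hmk _ _)] at h1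
  · intro h T hT
    obtain ⟨E, rfl⟩ | ⟨p, Y, hp, rfl⟩ := eq_prod_bot_or_eq_cone T
    · rw [prod_bot_mem_poset_iff hA] at hT
      obtain ⟨Z, hZ, hdir⟩ := (hA.mono (Finset.filter_subset
        (fun H => E ≤ H.direction) A)).exists_mem_poset_direction
      have hZE : Z.direction = E := by
        refine le_antisymm (fun v hv => hT v fun H hH hle => (hdir v).1 hv H ?_) fun v hv =>
          (hdir v).2 fun H hH => (Finset.mem_filter.1 hH).2 hv
        exact Finset.mem_filter.2 ⟨hH, hle⟩
      obtain ⟨q, hq⟩ := (AffineSubspace.nonempty_iff_ne_bot _).2 (mem_poset.1 hZ).1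
      have h1 := (mem_poset_iff.1
        (h Z (poset_mono (Finset.filter_subset _ _) hZ) q hq)).2
      rw [Submodule.prod_sup_prod, sup_bot_eq, prod_bot_mem_poset_iff hA]
      intro v hv
      have h2 := h1 (v +ᵥ q) fun H hH hle => by
        have hqH := hle (AffineSubspace.self_mem_mk' _ _)
        rw [mk'_le_iff hqH, hZE, sup_comm] at hle
        exact AffineSubspace.vadd_mem_of_mem_direction (hv H hH hle) hqH
      rwa [AffineSubspace.mem_mk', vadd_vsub, hZE, sup_comm] at h2
    · have hY : Y ≠ ⊥ := (AffineSubspace.nonempty_iff_ne_bot _).1 ⟨p, hp⟩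
      rw [← cone_eq hp, cone_mem_poset_iff hA hY] at hT
      rw [prod_bot_sup_coneSubmodule, hcone, cone_mem_poset_iff hA (hmk _ _)]
      exact h Y hT p hp

end ConeArrangement

end HypArr

namespace HypArr

/-- **Theorem.** The map `X ↦ {H ∈ A : cH ≤ X}` (with `cH ≤ X` in the
reverse-inclusion order, i.e. `X ⊆ cH`) is a bijection between the modular elements
`X` of `L(cA)` with `K ≤ X` (i.e. `X ⊆ K`, `X` located in the additional hyperplane)
and the modular subarrangements of `A`. -/
theorem cone_modularElements_biject_modularSubs
    {K V : Type*} [Field K] [AddCommGroup V] [Module K V] [FiniteDimensional K V]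
    (A : Finset (AffineSubspace K V)) (hA : IsArrangement A) :
    Set.BijOn (fun X : AffineSubspace K (V × K) => A.filter fun H => X ≤ cone H)
      {X : AffineSubspace K (V × K) |
        X ∈ poset (coneArr A) ∧ X ≤ addHyp K V ∧ IsModularElement (coneArr A) X}
      {B : Finset (AffineSubspace K V) | IsModularSub A B} := by
  refine ⟨?_, ?_, ?_⟩
  · rintro X ⟨hX, hle, hmod⟩
    obtain ⟨D, rfl⟩ := exists_eq_prod_bot hX hle
    rw [isModularElement_prod_bot_iff hA hX] at hmod
    simp only [filter_prod_bot_le_cone hA]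
    exact hmod.isModularSub hA
  · rintro X ⟨hX, hle, -⟩ X' ⟨hX', hle', -⟩ heq
    obtain ⟨D, rfl⟩ := exists_eq_prod_bot hX hle
    obtain ⟨D', rfl⟩ := exists_eq_prod_bot hX' hle'
    simp only [filter_prod_bot_le_cone hA] at heq
    rw [prod_bot_mem_poset_iff hA] at hX hX'
    have hiff : ∀ H ∈ A, (D ≤ H.direction ↔ D' ≤ H.direction) := Finset.filter_inj'.1 heq
    have hDD' : D = D' := le_antisymm
      (fun v hv => hX' v fun H hH hl => (hiff H hH).2 hl hv)
      (fun v hv => hX v fun H hH hl => (hiff H hH).1 hl hv)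
    rw [hDD']
  · intro B hB
    obtain ⟨D, hD, hDB, hBD⟩ := IsModularSub.exists_isModularDirection hA hB
    have hmem : (D.prod (⊥ : Submodule K K)).toAffineSubspace ∈ poset (coneArr A) := by
      refine (prod_bot_mem_poset_iff hA).2 fun v hv => hBD v fun H hH => ?_
      obtain ⟨hHA, hle⟩ := Finset.mem_filter.1 (hDB.symm ▸ hH)
      exact hv H hHA hle
    refine ⟨_, ⟨hmem, prod_bot_le_addHyp D, (isModularElement_prod_bot_iff hA hmem).2 hD⟩, ?_⟩
    simp only [filter_prod_bot_le_cone hA]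
    exact hDB

end HypArr
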